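/- Let H and K be finitely generated cosemisimple Hopf algebras over an algebraically closed field, and suppose there is a semiring isomorphism f : R_+(H) → R_+(K) between their Grothendieck semirings. If there exists a class [X] ∈ R_+(H) with dim X > dim f(X), then GKdim H = ∞. -/

import Mathlib

/-!
Background definitions: comodules over a Hopf algebra, simple comodules, direct
summands, supports, subcoalgebras, cosemisimplicity, Gelfand-Kirillov dimension,
and (measured) Grothendieck semirings of cosemisimple Hopf algebras.
-/

open TensorProduct

/-- The data of a coaction of a Hopf algebra `H` on a `k`-vector space `X`:
a linear map `ρ : X → X ⊗ H`.  The comodule axioms are recorded separately in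
`Comod.IsComodule`. -/
structure Comod (k : Type) [Field k] (H : Type) [Ring H] [HopfAlgebra k H] : Type 1 where
  X : Type
  [addCommGroup : AddCommGroup X]
  [module : Module k X]
  ρ : X →ₗ[k] X ⊗[k] H

attribute [instance] Comod.addCommGroup Comod.module

namespace Comod

variable {k : Type} [Field k] {H : Type} [Ring H] [HopfAlgebra k H]

/-- The trivial `H`-comodule `𝟏`, i.e. `k` with coaction `x ↦ x ⊗ 1`. -/
noncomputable def unit (k : Type) [Field k] (H : Type) [Ring H] [HopfAlgebra k H] :
    Comod k H where
  X := k
  ρ := (TensorProduct.mk k k H).flip 1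

/-- The regular comodule: `H` coacting on itself by comultiplication. -/
noncomputable def regular (k : Type) [Field k] (H : Type) [Ring H] [HopfAlgebra k H] :
    Comod k H where
  X := H
  ρ := Coalgebra.comul

/-- Tensor product of comodules: the coaction on `M ⊗ N` is
`(id ⊗ id ⊗ μ_H) ∘ (id ⊗ τ ⊗ id) ∘ (ρ_M ⊗ ρ_N)`. -/
noncomputable def tensor (M N : Comod k H) : Comod k H where
  X := M.X ⊗[k] N.X
  ρ := (LinearMap.mul' k H).lTensor (M.X ⊗[k] N.X)
        ∘ₗ (TensorProduct.tensorTensorTensorComm k M.X H N.X H).toLinearMap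
        ∘ₗ TensorProduct.map M.ρ N.ρ

/-- Binary direct sum of comodules. -/
noncomputable def dsum (M N : Comod k H) : Comod k H where
  X := M.X × N.X
  ρ := (LinearMap.inl k M.X N.X).rTensor H ∘ₗ M.ρ ∘ₗ LinearMap.fst k M.X N.X
     + (LinearMap.inr k M.X N.X).rTensor H ∘ₗ N.ρ ∘ₗ LinearMap.snd k M.X N.X

/-- Finite direct sum of a family of comodules. -/
noncomputable def pi {ι : Type} [Fintype ι] (S : ι → Comod k H) : Comod k H where
  X := ∀ i, (S i).X
  ρ := letI := Classical.decEq ι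
    ∑ i : ι, (LinearMap.single k (fun j => (S j).X) i).rTensor H ∘ₗ (S i).ρ
        ∘ₗ LinearMap.proj i

/-- `n`-th tensor power of a comodule (`M^{⊗0} = 𝟏`, `M^{⊗1} = M`). -/
noncomputable def tpow (M : Comod k H) : ℕ → Comod k H
  | 0 => unit k H
  | 1 => M
  | n + 2 => (M.tpow (n + 1)).tensor M

/-- A linear map is a map of comodules if it intertwines the coactions. -/
def IsHom (M N : Comod k H) (f : M.X →ₗ[k] N.X) : Prop :=
  N.ρ ∘ₗ f = f.rTensor H ∘ₗ M.ρ

/-- Isomorphism of comodules. -/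
def Iso (M N : Comod k H) : Prop :=
  ∃ e : M.X ≃ₗ[k] N.X, IsHom M N e.toLinearMap

/-- The comodule axioms (coassociativity and counitality) for a coaction. -/
def IsComodule (M : Comod k H) : Prop :=
  (M.ρ.rTensor H ∘ₗ M.ρ =
      (TensorProduct.assoc k M.X H H).symm.toLinearMap
        ∘ₗ (Coalgebra.comul (R := k) (A := H)).lTensor M.X ∘ₗ M.ρ) ∧
  (TensorProduct.rid k M.X).toLinearMap
      ∘ₗ (Coalgebra.counit (R := k) (A := H)).lTensor M.X ∘ₗ M.ρ = LinearMap.id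

/-- A subspace `N ⊆ M` is a subcomodule if the coaction restricts to `N ⊗ H`. -/
def IsSubcomodule (M : Comod k H) (N : Submodule k M.X) : Prop :=
  ∀ x ∈ N, M.ρ x ∈ LinearMap.range (N.subtype.rTensor H)

/-- Simple (hence finite-dimensional) comodules. -/
def IsSimple (M : Comod k H) : Prop :=
  M.IsComodule ∧ Nontrivial M.X ∧ FiniteDimensional k M.X ∧
    ∀ N : Submodule k M.X, M.IsSubcomodule N → N = ⊥ ∨ N = ⊤

/-- `S` is a direct summand of `M` (as comodules): the inclusion splits. -/
def DirectSummand (S M : Comod k H) : Prop :=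
  ∃ (i : S.X →ₗ[k] M.X) (p : M.X →ₗ[k] S.X),
    IsHom S M i ∧ IsHom M S p ∧ p ∘ₗ i = LinearMap.id

/-- `C` is the support of the comodule `M`: the (unique) minimal subspace
`C ⊆ H` with `ρ(M) ⊆ M ⊗ C`. -/
def IsSupport (M : Comod k H) (C : Submodule k H) : Prop :=
  (∀ x : M.X, M.ρ x ∈ LinearMap.range (C.subtype.lTensor M.X)) ∧
    ∀ C' : Submodule k H,
      (∀ x : M.X, M.ρ x ∈ LinearMap.range (C'.subtype.lTensor M.X)) → C ≤ C'

end Comod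

/-- A subspace `C ⊆ H` is a subcoalgebra if `Δ(C) ⊆ C ⊗ C`. -/
def IsSubcoalgebra (k : Type) [Field k] (H : Type) [Ring H] [HopfAlgebra k H]
    (C : Submodule k H) : Prop :=
  ∀ x ∈ C, Coalgebra.comul (R := k) x ∈
    LinearMap.range (TensorProduct.map C.subtype C.subtype)

/-- A simple subcoalgebra: a nonzero subcoalgebra with no proper nonzero
subcoalgebras. -/
def IsSimpleSubcoalgebra (k : Type) [Field k] (H : Type) [Ring H] [HopfAlgebra k H]
    (C : Submodule k H) : Prop :=
  IsSubcoalgebra k H C ∧ C ≠ ⊥ ∧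
    ∀ D : Submodule k H, D ≤ C → IsSubcoalgebra k H D → D = ⊥ ∨ D = C

/-- A Hopf algebra is cosemisimple if every subcomodule of every comodule is a
direct summand. -/
def IsCosemisimple (k : Type) [Field k] (H : Type) [Ring H] [HopfAlgebra k H] : Prop :=
  ∀ M : Comod k H, M.IsComodule →
    ∀ N : Submodule k M.X, M.IsSubcomodule N →
      ∃ N' : Submodule k M.X, M.IsSubcomodule N' ∧ IsCompl N N'

open scoped ENNReal in
/-- The Gelfand-Kirillov dimension of a `k`-algebra `A`:
`sup_V limsup_n log(dim V^n)/log n` over finite-dimensional subspaces `V ⊆ A`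
(for a finitely generated algebra this agrees with the value computed from any
finite-dimensional generating subspace containing `1`). -/
noncomputable def GKdim (k : Type) (A : Type) [Field k] [Ring A] [Algebra k A] : ℝ≥0∞ :=
  ⨆ (V : Submodule k A) (_ : FiniteDimensional k V),
    Filter.limsup
      (fun n : ℕ => ENNReal.ofReal
        (Real.log (Module.finrank k ↥(V ^ n)) / Real.log n)) Filter.atTop

/-- The (measured) Grothendieck semiring of a cosemisimple Hopf algebra `H`:
a commutative semiring `R` together with a class map `cls` on finite-dimensional
`H`-comodules which is constant on isomorphism classes, additive on direct sums,
multiplicative on tensor products, sends `𝟏` to `1`, and induces a bijection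
between iso-classes of finite-dimensional comodules and elements of `R`.
The dimension function `d_H` on `R_+(H)` is recovered as `cls M ↦ dim_k M`. -/
structure GrSemiring (k : Type) [Field k] (H : Type) [Ring H] [HopfAlgebra k H] :
    Type 1 where
  R : Type
  [commSemiring : CommSemiring R]
  cls : Comod k H → R
  cls_one : cls (Comod.unit k H) = 1
  cls_iso : ∀ M N : Comod k H, M.IsComodule → N.IsComodule →
    FiniteDimensional k M.X → FiniteDimensional k N.X → Comod.Iso M N → cls M = cls N
  cls_dsum : ∀ M N : Comod k H, M.IsComodule → N.IsComodule →
    FiniteDimensional k M.X → FiniteDimensional k N.X →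
      cls (M.dsum N) = cls M + cls N
  cls_tensor : ∀ M N : Comod k H, M.IsComodule → N.IsComodule →
    FiniteDimensional k M.X → FiniteDimensional k N.X →
      cls (M.tensor N) = cls M * cls N
  cls_surj : ∀ r : R, ∃ M : Comod k H, M.IsComodule ∧ FiniteDimensional k M.X ∧ cls M = r
  cls_inj : ∀ M N : Comod k H, M.IsComodule → N.IsComodule →
    FiniteDimensional k M.X → FiniteDimensional k N.X → cls M = cls N → Comod.Iso M N

attribute [instance] GrSemiring.commSemiring

/-!
A simple comodule `S` whose coaction takes values in `S ⊗ W` embeds into `W`, through the matrix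
coefficient map of any nonzero functional.  By complete reducibility, a comodule `M` with
coefficients in `W` satisfies `dim M ≤ dim W * d [M]` for every additive `d : R_+(H) → ℕ` that
vanishes only at `0`.  If `X` has coefficients in `W`, then its tensor power `X^{⊗n}` has
coefficients in the product subspace `W ^ n`, so for multiplicative `d` this gives
`dim (W ^ n) ≥ (dim X / d [X]) ^ n`: exponential growth as soon as `d [X] < dim X`.  Such a `d` is
`dim ∘ f`.
-/

section CofreeComodule

variable (R C M : Type*) {N : Type*} [CommSemiring R]
  [AddCommMonoid C] [Module R C] [Coalgebra R C]
  [AddCommMonoid M] [Module R M] [AddCommMonoid N] [Module R N]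

/-- The comultiplication `M ⊗ C → (M ⊗ C) ⊗ C` of the comonad `- ⊗ C`, whose coalgebras are the
`C`-comodules; the comodule axioms and their stability properties are phrased through it. -/
noncomputable def cofreeComul : M ⊗[R] C →ₗ[R] (M ⊗[R] C) ⊗[R] C :=
  (TensorProduct.assoc R M C C).symm.toLinearMap ∘ₗ (Coalgebra.comul (R := R)).lTensor M

/-- The counit `M ⊗ C → M` of the comonad `- ⊗ C`. -/
noncomputable def cofreeCounit : M ⊗[R] C →ₗ[R] M :=
  (TensorProduct.rid R M).toLinearMap ∘ₗ (Coalgebra.counit (R := R)).lTensor M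

variable {M}

theorem cofreeComul_comp_rTensor (f : M →ₗ[R] N) :
    cofreeComul R C N ∘ₗ f.rTensor C = (f.rTensor C).rTensor C ∘ₗ cofreeComul R C M := by
  have assoc_natural : (TensorProduct.assoc R N C C).symm.toLinearMap ∘ₗ f.rTensor (C ⊗[R] C) =
      (f.rTensor C).rTensor C ∘ₗ (TensorProduct.assoc R M C C).symm.toLinearMap := by
    ext; simp
  calc cofreeComul R C N ∘ₗ f.rTensor C
      = ((TensorProduct.assoc R N C C).symm.toLinearMap ∘ₗ f.rTensor (C ⊗[R] C)) ∘ₗ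
          (Coalgebra.comul (R := R)).lTensor M := by
        rw [cofreeComul, LinearMap.comp_assoc, LinearMap.comp_assoc,
          LinearMap.lTensor_comp_rTensor, LinearMap.rTensor_comp_lTensor]
    _ = (f.rTensor C).rTensor C ∘ₗ cofreeComul R C M := by
        rw [assoc_natural, cofreeComul, LinearMap.comp_assoc]

theorem cofreeCounit_comp_rTensor (f : M →ₗ[R] N) :
    cofreeCounit R C N ∘ₗ f.rTensor C = f ∘ₗ cofreeCounit R C M := by
  ext; simp [cofreeCounit]

theorem comul_comp_lid :
    Coalgebra.comul ∘ₗ (TensorProduct.lid R C).toLinearMap =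
      (TensorProduct.lid R C).toLinearMap.rTensor C ∘ₗ cofreeComul R C R := by
  have lid_assoc : (TensorProduct.lid R C).toLinearMap.rTensor C ∘ₗ
      (TensorProduct.assoc R R C C).symm.toLinearMap =
        (TensorProduct.lid R (C ⊗[R] C)).toLinearMap := by
    ext; simp
  rw [cofreeComul, ← LinearMap.comp_assoc, lid_assoc]
  ext; simp

theorem counit_comp_lid :
    Coalgebra.counit ∘ₗ (TensorProduct.lid R C).toLinearMap = cofreeCounit R C R := by
  ext; simp [cofreeCounit]

end CofreeComodule

section MulTensor

variable (R B M N : Type*) [CommSemiring R] [Semiring B] [Algebra R B]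
  [AddCommMonoid M] [Module R M] [AddCommMonoid N] [Module R N]

/-- The map `(m ⊗ b) ⊗ (n ⊗ c) ↦ (m ⊗ n) ⊗ b * c`, through which the coaction on a tensor product
of comodules is defined. -/
noncomputable def mulTensor : (M ⊗[R] B) ⊗[R] (N ⊗[R] B) →ₗ[R] (M ⊗[R] N) ⊗[R] B :=
  (LinearMap.mul' R B).lTensor (M ⊗[R] N) ∘ₗ
    (TensorProduct.tensorTensorTensorComm R M B N B).toLinearMap

variable {R B M N}

@[simp]
theorem mulTensor_tmul (m : M) (b : B) (n : N) (c : B) :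
    mulTensor R B M N ((m ⊗ₜ b) ⊗ₜ (n ⊗ₜ c)) = (m ⊗ₜ n) ⊗ₜ (b * c) := by
  simp [mulTensor]

theorem mulTensor_comp_map_rTensor {M' N' : Type*} [AddCommMonoid M'] [Module R M']
    [AddCommMonoid N'] [Module R N'] (f : M →ₗ[R] M') (g : N →ₗ[R] N') :
    mulTensor R B M' N' ∘ₗ TensorProduct.map (f.rTensor B) (g.rTensor B) =
      (TensorProduct.map f g).rTensor B ∘ₗ mulTensor R B M N := by
  ext; simp

theorem mulTensor_comp_map_lTensor_subtype (V W : Submodule R B) :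
    mulTensor R B M N ∘ₗ TensorProduct.map (V.subtype.lTensor M) (W.subtype.lTensor N) =
      (V * W).subtype.lTensor (M ⊗[R] N) ∘ₗ (V.mulMap' W).lTensor (M ⊗[R] N) ∘ₗ
        (TensorProduct.tensorTensorTensorComm R M V N W).toLinearMap := by
  ext; simp

theorem mulTensor_rTensor_assoc_symm (m : M) (n : N) (s t : B ⊗[R] B) :
    (mulTensor R B M N).rTensor B (mulTensor R B (M ⊗[R] B) (N ⊗[R] B)
      ((TensorProduct.assoc R M B B).symm (m ⊗ₜ s) ⊗ₜ
        (TensorProduct.assoc R N B B).symm (n ⊗ₜ t))) =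
      (TensorProduct.assoc R (M ⊗[R] N) B B).symm ((m ⊗ₜ n) ⊗ₜ (s * t)) := by
  induction s with
  | zero => simp
  | add s₁ s₂ h₁ h₂ =>
    simp only [add_mul, TensorProduct.tmul_add, map_add, TensorProduct.add_tmul, h₁, h₂]
  | tmul a b =>
    induction t with
    | zero => simp
    | add t₁ t₂ h₁ h₂ => simp only [mul_add, TensorProduct.tmul_add, map_add, h₁, h₂]
    | tmul c d => simp

end MulTensor

section CofreeComoduleMulTensor

variable {R B M N : Type*} [CommSemiring R] [Semiring B] [Bialgebra R B]
  [AddCommMonoid M] [Module R M] [AddCommMonoid N] [Module R N]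

theorem cofreeComul_comp_mulTensor :
    cofreeComul R B (M ⊗[R] N) ∘ₗ mulTensor R B M N =
      (mulTensor R B M N).rTensor B ∘ₗ mulTensor R B (M ⊗[R] B) (N ⊗[R] B) ∘ₗ
        TensorProduct.map (cofreeComul R B M) (cofreeComul R B N) := by
  ext m b n c
  simp [cofreeComul, mulTensor_rTensor_assoc_symm]

theorem cofreeCounit_comp_mulTensor :
    cofreeCounit R B (M ⊗[R] N) ∘ₗ mulTensor R B M N =
      TensorProduct.map (cofreeCounit R B M) (cofreeCounit R B N) := by
  ext
  simp [cofreeCounit, TensorProduct.smul_tmul', TensorProduct.tmul_smul, smul_smul, mul_comm]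

end CofreeComoduleMulTensor

namespace Comod

variable {k : Type} [Field k] {H : Type} [Ring H] [HopfAlgebra k H]

section Hom

variable {M N : Comod k H} {f : M.X →ₗ[k] N.X}

theorem IsComodule.coassoc (hM : M.IsComodule) :
    M.ρ.rTensor H ∘ₗ M.ρ = cofreeComul k H M.X ∘ₗ M.ρ :=
  hM.1

theorem IsComodule.counit (hM : M.IsComodule) : cofreeCounit k H M.X ∘ₗ M.ρ = LinearMap.id :=
  hM.2

theorem IsHom.rTensor_comp_coaction_comp (hf : IsHom M N f) :
    (N.ρ.rTensor H ∘ₗ N.ρ) ∘ₗ f = (f.rTensor H).rTensor H ∘ₗ (M.ρ.rTensor H ∘ₗ M.ρ) := by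
  rw [LinearMap.comp_assoc, hf, ← LinearMap.comp_assoc, ← LinearMap.rTensor_comp, hf,
    LinearMap.rTensor_comp, LinearMap.comp_assoc]

theorem IsHom.cofreeComul_comp (hf : IsHom M N f) :
    (cofreeComul k H N.X ∘ₗ N.ρ) ∘ₗ f =
      (f.rTensor H).rTensor H ∘ₗ (cofreeComul k H M.X ∘ₗ M.ρ) := by
  rw [LinearMap.comp_assoc, hf, ← LinearMap.comp_assoc, cofreeComul_comp_rTensor,
    LinearMap.comp_assoc]

theorem IsHom.cofreeCounit_comp (hf : IsHom M N f) :
    (cofreeCounit k H N.X ∘ₗ N.ρ) ∘ₗ f = f ∘ₗ (cofreeCounit k H M.X ∘ₗ M.ρ) := by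
  rw [LinearMap.comp_assoc, hf, ← LinearMap.comp_assoc, cofreeCounit_comp_rTensor,
    LinearMap.comp_assoc]

theorem IsHom.coassoc_comp (hf : IsHom M N f) (hM : M.IsComodule) :
    (N.ρ.rTensor H ∘ₗ N.ρ) ∘ₗ f = (cofreeComul k H N.X ∘ₗ N.ρ) ∘ₗ f := by
  rw [hf.rTensor_comp_coaction_comp, hf.cofreeComul_comp, hM.coassoc]

theorem IsHom.counit_comp (hf : IsHom M N f) (hM : M.IsComodule) :
    (cofreeCounit k H N.X ∘ₗ N.ρ) ∘ₗ f = f := by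
  rw [hf.cofreeCounit_comp, hM.counit, LinearMap.comp_id]

theorem IsComodule.of_injective (hN : N.IsComodule) (hf : IsHom M N f)
    (hinj : Function.Injective f) : M.IsComodule := by
  have hinj₂ : Function.Injective ((f.rTensor H).rTensor H) :=
    Module.Flat.rTensor_preserves_injective_linearMap _
      (Module.Flat.rTensor_preserves_injective_linearMap f hinj)
  refine ⟨(LinearMap.cancel_left hinj₂).1 ?_, (LinearMap.cancel_left hinj).1 ?_⟩
  · exact hf.rTensor_comp_coaction_comp.symm.trans (hN.coassoc ▸ hf.cofreeComul_comp)
  · exact hf.cofreeCounit_comp.symm.trans (by rw [hN.counit]; rfl)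

theorem IsHom.isSubcomodule_ker (hf : IsHom M N f) : M.IsSubcomodule (LinearMap.ker f) := by
  intro x hx
  have hρx : f.rTensor H (M.ρ x) = 0 := by
    rw [← LinearMap.comp_apply, ← hf, LinearMap.comp_apply, LinearMap.mem_ker.1 hx, map_zero]
  exact (Module.Flat.rTensor_exact H (LinearMap.exact_subtype_ker_map f) _).1 hρx

theorem Iso.of_subsingleton [Subsingleton M.X] [Subsingleton N.X] : Iso M N :=
  ⟨LinearEquiv.ofSubsingleton _ _, LinearMap.ext fun x => by
    rw [Subsingleton.elim x 0, map_zero, map_zero]⟩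

theorem Iso.finrank_eq (h : Iso M N) : Module.finrank k M.X = Module.finrank k N.X :=
  h.choose.finrank_eq

end Hom

section Constructions

variable {M N : Comod k H}

theorem isComodule_unit : (unit k H).IsComodule :=
  ⟨LinearMap.ext_ring <| show (1 ⊗ₜ 1) ⊗ₜ 1 =
      (TensorProduct.assoc k k H H).symm (1 ⊗ₜ Coalgebra.comul (R := k) (1 : H)) by
    rw [Bialgebra.comul_one, Algebra.TensorProduct.one_def, TensorProduct.assoc_symm_tmul],
   LinearMap.ext_ring <| show TensorProduct.rid k k (1 ⊗ₜ Coalgebra.counit (R := k) (1 : H)) = 1 by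
    rw [Bialgebra.counit_one, TensorProduct.rid_tmul, smul_eq_mul, one_mul]⟩

instance : FiniteDimensional k (unit k H).X := inferInstanceAs (FiniteDimensional k k)

theorem finrank_unit : Module.finrank k (unit k H).X = 1 := Module.finrank_self k

theorem IsComodule.tensor (hM : M.IsComodule) (hN : N.IsComodule) : (M.tensor N).IsComodule := by
  let μ := mulTensor k H M.X N.X
  let ρ := TensorProduct.map M.ρ N.ρ
  constructor
  · calc (μ ∘ₗ ρ).rTensor H ∘ₗ (μ ∘ₗ ρ)
        = μ.rTensor H ∘ₗ (ρ.rTensor H ∘ₗ μ) ∘ₗ ρ := by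
          rw [LinearMap.rTensor_comp]; rfl
      _ = μ.rTensor H ∘ₗ mulTensor k H (M.X ⊗[k] H) (N.X ⊗[k] H) ∘ₗ
            TensorProduct.map (M.ρ.rTensor H ∘ₗ M.ρ) (N.ρ.rTensor H ∘ₗ N.ρ) := by
          rw [← mulTensor_comp_map_rTensor, TensorProduct.map_comp]; rfl
      _ = (cofreeComul k H (M.X ⊗[k] N.X) ∘ₗ μ) ∘ₗ ρ := by
          rw [hM.coassoc, hN.coassoc, TensorProduct.map_comp, cofreeComul_comp_mulTensor]; rfl
  · calc cofreeCounit k H (M.X ⊗[k] N.X) ∘ₗ (μ ∘ₗ ρ)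
        = TensorProduct.map (cofreeCounit k H M.X ∘ₗ M.ρ) (cofreeCounit k H N.X ∘ₗ N.ρ) := by
          rw [← LinearMap.comp_assoc, cofreeCounit_comp_mulTensor, TensorProduct.map_comp]
      _ = LinearMap.id := by rw [hM.counit, hN.counit, TensorProduct.map_id]

instance [FiniteDimensional k M.X] [FiniteDimensional k N.X] :
    FiniteDimensional k (M.tensor N).X :=
  inferInstanceAs (FiniteDimensional k (M.X ⊗[k] N.X))

theorem finrank_tensor :
    Module.finrank k (M.tensor N).X = Module.finrank k M.X * Module.finrank k N.X :=
  Module.finrank_tensorProduct (R := k) (S := k) (M := M.X) (M' := N.X)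

theorem IsComodule.tpow (hM : M.IsComodule) : ∀ n, (M.tpow n).IsComodule
  | 0 => isComodule_unit
  | 1 => hM
  | n + 2 => (hM.tpow (n + 1)).tensor hM

instance finiteDimensional_tpow (M : Comod k H) [FiniteDimensional k M.X] :
    ∀ n, FiniteDimensional k (M.tpow n).X
  | 0 => inferInstanceAs (FiniteDimensional k (unit k H).X)
  | 1 => inferInstanceAs (FiniteDimensional k M.X)
  | n + 2 =>
    have := finiteDimensional_tpow M (n + 1)
    inferInstanceAs (FiniteDimensional k ((M.tpow (n + 1)).tensor M).X)

theorem isHom_inl : IsHom M (M.dsum N) (LinearMap.inl k M.X N.X) :=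
  LinearMap.ext fun x => show (LinearMap.inl k M.X N.X).rTensor H (M.ρ x) +
      (LinearMap.inr k M.X N.X).rTensor H (N.ρ 0) = _ by
    rw [map_zero, map_zero, add_zero]; rfl

theorem isHom_inr : IsHom N (M.dsum N) (LinearMap.inr k M.X N.X) :=
  LinearMap.ext fun x => show (LinearMap.inl k M.X N.X).rTensor H (M.ρ 0) +
      (LinearMap.inr k M.X N.X).rTensor H (N.ρ x) = _ by
    rw [map_zero, map_zero, zero_add]; rfl

theorem IsHom.of_comp_inl_inr {P : Comod k H} {f : M.X × N.X →ₗ[k] P.X}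
    (hl : IsHom M P (f ∘ₗ LinearMap.inl k M.X N.X))
    (hr : IsHom N P (f ∘ₗ LinearMap.inr k M.X N.X)) : IsHom (M.dsum N) P f := by
  refine LinearMap.prod_ext ?_ ?_
  · calc P.ρ ∘ₗ (f ∘ₗ LinearMap.inl k M.X N.X)
        = f.rTensor H ∘ₗ ((LinearMap.inl k M.X N.X).rTensor H ∘ₗ M.ρ) := by
          rw [hl, LinearMap.rTensor_comp, LinearMap.comp_assoc]
      _ = f.rTensor H ∘ₗ ((M.dsum N).ρ ∘ₗ LinearMap.inl k M.X N.X) :=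
          congrArg (f.rTensor H ∘ₗ ·) isHom_inl.symm
  · calc P.ρ ∘ₗ (f ∘ₗ LinearMap.inr k M.X N.X)
        = f.rTensor H ∘ₗ ((LinearMap.inr k M.X N.X).rTensor H ∘ₗ N.ρ) := by
          rw [hr, LinearMap.rTensor_comp, LinearMap.comp_assoc]
      _ = f.rTensor H ∘ₗ ((M.dsum N).ρ ∘ₗ LinearMap.inr k M.X N.X) :=
          congrArg (f.rTensor H ∘ₗ ·) isHom_inr.symm

theorem IsComodule.dsum (hM : M.IsComodule) (hN : N.IsComodule) : (M.dsum N).IsComodule :=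
  ⟨LinearMap.prod_ext (isHom_inl.coassoc_comp hM) (isHom_inr.coassoc_comp hN),
    LinearMap.prod_ext (isHom_inl.counit_comp hM) (isHom_inr.counit_comp hN)⟩

instance [FiniteDimensional k M.X] [FiniteDimensional k N.X] : FiniteDimensional k (M.dsum N).X :=
  inferInstanceAs (FiniteDimensional k (M.X × N.X))

theorem finrank_dsum [FiniteDimensional k M.X] [FiniteDimensional k N.X] :
    Module.finrank k (M.dsum N).X = Module.finrank k M.X + Module.finrank k N.X :=
  Module.finrank_prod (R := k) (M := M.X) (M' := N.X)

end Constructions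

section Restrict

variable {M : Comod k H} {A B : Submodule k M.X}

/-- A subcomodule `A` of `M` as a comodule in its own right. -/
noncomputable def restrict (M : Comod k H) (A : Submodule k M.X) (hA : M.IsSubcomodule A) :
    Comod k H where
  X := A
  ρ := (M.ρ ∘ₗ A.subtype).codRestrictOfInjective (A.subtype.rTensor H)
    (Module.Flat.rTensor_preserves_injective_linearMap _ A.injective_subtype) fun x => hA x x.2

instance [FiniteDimensional k M.X] (hA : M.IsSubcomodule A) :
    FiniteDimensional k (M.restrict A hA).X :=
  inferInstanceAs (FiniteDimensional k A)

theorem isHom_subtype (hA : M.IsSubcomodule A) : IsHom (M.restrict A hA) M A.subtype :=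
  (LinearMap.codRestrictOfInjective_comp _ _ _ _).symm

theorem IsComodule.restrict (hM : M.IsComodule) (hA : M.IsSubcomodule A) :
    (M.restrict A hA).IsComodule :=
  hM.of_injective (isHom_subtype hA) A.injective_subtype

theorem iso_dsum_restrict_of_isCompl (hA : M.IsSubcomodule A) (hB : M.IsSubcomodule B)
    (hAB : IsCompl A B) : Iso ((M.restrict A hA).dsum (M.restrict B hB)) M := by
  let e := Submodule.prodEquivOfIsCompl A B hAB
  have he_inl : e.toLinearMap ∘ₗ LinearMap.inl k A B = A.subtype := by ext; simp [e]
  have he_inr : e.toLinearMap ∘ₗ LinearMap.inr k A B = B.subtype := by ext; simp [e]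
  exact ⟨e, .of_comp_inl_inr (he_inl ▸ isHom_subtype hA) (he_inr ▸ isHom_subtype hB)⟩

end Restrict

section Coefficients

variable {M N : Comod k H} {V W : Submodule k H}

/-- `M` has its coefficients in `W`, i.e. `ρ(M) ⊆ M ⊗ W`; stated as a factorization of the
coaction so that it composes. -/
def SupportedIn (M : Comod k H) (W : Submodule k H) : Prop :=
  ∃ σ : M.X →ₗ[k] M.X ⊗[k] W, M.ρ = W.subtype.lTensor M.X ∘ₗ σ

theorem exists_finiteDimensional_supportedIn (M : Comod k H) [FiniteDimensional k M.X] :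
    ∃ W : Submodule k H, FiniteDimensional k W ∧ M.SupportedIn W := by
  let b := Module.finBasis k M.X
  obtain ⟨W, hW, hbW⟩ := TensorProduct.exists_finite_submodule_right_of_setFinite
    (Set.range (M.ρ ∘ b)) (Set.finite_range _)
  have hρ : LinearMap.range M.ρ ≤ LinearMap.range (W.subtype.lTensor M.X) := by
    rwa [LinearMap.range_eq_map, ← b.span_eq, Submodule.map_span, Submodule.span_le,
      ← Set.range_comp]
  exact ⟨W, hW, _, (LinearMap.codRestrictOfInjective_comp M.ρ _
    (Module.Flat.lTensor_preserves_injective_linearMap _ W.injective_subtype)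
    fun x => hρ ⟨x, rfl⟩).symm⟩

theorem supportedIn_unit : (unit k H).SupportedIn 1 :=
  ⟨(TensorProduct.mk k k (1 : Submodule k H)).flip ⟨1, Submodule.one_le.1 le_rfl⟩, rfl⟩

theorem SupportedIn.tensor : M.SupportedIn V → N.SupportedIn W →
    (M.tensor N).SupportedIn (V * W) := by
  rintro ⟨σ, hσ⟩ ⟨τ, hτ⟩
  refine ⟨((V.mulMap' W).lTensor (M.X ⊗[k] N.X) ∘ₗ
    (TensorProduct.tensorTensorTensorComm k M.X V N.X W).toLinearMap) ∘ₗ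
      TensorProduct.map σ τ, ?_⟩
  change mulTensor k H M.X N.X ∘ₗ TensorProduct.map M.ρ N.ρ = _
  rw [hσ, hτ, TensorProduct.map_comp, ← LinearMap.comp_assoc, mulTensor_comp_map_lTensor_subtype]
  rfl

theorem SupportedIn.tpow (hM : M.SupportedIn W) : ∀ n, (M.tpow n).SupportedIn (W ^ n)
  | 0 => by rw [pow_zero]; exact supportedIn_unit
  | 1 => by rw [pow_one]; exact hM
  | n + 2 => by rw [pow_succ]; exact (hM.tpow (n + 1)).tensor hM

theorem SupportedIn.of_injective {f : M.X →ₗ[k] N.X} (hN : N.SupportedIn W) (hf : IsHom M N f)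
    (hinj : Function.Injective f) : M.SupportedIn W := by
  obtain ⟨σ, hσ⟩ := hN
  obtain ⟨p, hp⟩ := f.exists_leftInverse_of_injective (LinearMap.ker_eq_bot.2 hinj)
  refine ⟨p.rTensor W ∘ₗ σ ∘ₗ f, ?_⟩
  calc M.ρ = p.rTensor H ∘ₗ N.ρ ∘ₗ f := by
        rw [hf, ← LinearMap.comp_assoc, ← LinearMap.rTensor_comp, hp, LinearMap.rTensor_id,
          LinearMap.id_comp]
    _ = (p.rTensor H ∘ₗ W.subtype.lTensor N.X) ∘ₗ σ ∘ₗ f := by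
        rw [hσ, LinearMap.comp_assoc, LinearMap.comp_assoc]
    _ = W.subtype.lTensor M.X ∘ₗ p.rTensor W ∘ₗ σ ∘ₗ f := by
        rw [LinearMap.rTensor_comp_lTensor, ← LinearMap.lTensor_comp_rTensor,
          LinearMap.comp_assoc]

/-- The matrix coefficient map `x ↦ (φ ⊗ id) (ρ x)` of a functional `φ` on `M`. -/
noncomputable def coeff (M : Comod k H) (φ : M.X →ₗ[k] k) : M.X →ₗ[k] H :=
  (TensorProduct.lid k H).toLinearMap ∘ₗ φ.rTensor H ∘ₗ M.ρ

theorem isHom_coeff (hM : M.IsComodule) (φ : M.X →ₗ[k] k) :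
    IsHom M (regular k H) (M.coeff φ) := by
  let l := (TensorProduct.lid k H).toLinearMap
  calc Coalgebra.comul ∘ₗ l ∘ₗ φ.rTensor H ∘ₗ M.ρ
      = l.rTensor H ∘ₗ (cofreeComul k H k ∘ₗ φ.rTensor H) ∘ₗ M.ρ := by
        rw [← LinearMap.comp_assoc, comul_comp_lid]; rfl
    _ = l.rTensor H ∘ₗ (φ.rTensor H).rTensor H ∘ₗ (M.ρ.rTensor H ∘ₗ M.ρ) := by
        rw [cofreeComul_comp_rTensor, hM.coassoc]; rfl
    _ = (l ∘ₗ φ.rTensor H ∘ₗ M.ρ).rTensor H ∘ₗ M.ρ := by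
        simp only [LinearMap.rTensor_comp, LinearMap.comp_assoc]

theorem counit_comp_coeff (hM : M.IsComodule) (φ : M.X →ₗ[k] k) :
    Coalgebra.counit ∘ₗ M.coeff φ = φ := by
  rw [coeff, ← LinearMap.comp_assoc, counit_comp_lid, ← LinearMap.comp_assoc,
    cofreeCounit_comp_rTensor, LinearMap.comp_assoc, hM.counit, LinearMap.comp_id]

theorem SupportedIn.coeff_mem (hM : M.SupportedIn W) (φ : M.X →ₗ[k] k) (x : M.X) :
    M.coeff φ x ∈ W := by
  obtain ⟨σ, hσ⟩ := hM
  have hφ : (TensorProduct.lid k H).toLinearMap ∘ₗ φ.rTensor H ∘ₗ W.subtype.lTensor M.X =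
      W.subtype ∘ₗ (TensorProduct.lid k W).toLinearMap ∘ₗ φ.rTensor W := by
    ext; simp
  have hx : M.coeff φ x = W.subtype (TensorProduct.lid k W (φ.rTensor W (σ x))) := by
    rw [coeff, hσ]
    exact LinearMap.congr_fun hφ (σ x)
  exact hx ▸ Subtype.prop _

theorem IsSimple.finrank_le (hM : M.IsSimple) [FiniteDimensional k W] (hW : M.SupportedIn W) :
    Module.finrank k M.X ≤ Module.finrank k W := by
  obtain ⟨hcomod, hnontrivial, -, hsimple⟩ := hM
  obtain ⟨φ, hφ⟩ := exists_ne (0 : M.X →ₗ[k] k)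
  have hker : LinearMap.ker (M.coeff φ) = ⊥ := by
    refine (hsimple _ (isHom_coeff hcomod φ).isSubcomodule_ker).resolve_right fun htop => hφ ?_
    rw [← counit_comp_coeff hcomod φ, LinearMap.ker_eq_top.1 htop]
    exact LinearMap.comp_zero _
  refine LinearMap.finrank_le_finrank_of_injective
    (f := (M.coeff φ).codRestrict W (hW.coeff_mem φ)) ?_
  rw [← LinearMap.ker_eq_bot, LinearMap.ker_codRestrict, hker]

end Coefficients

end Comod

namespace GrSemiring

open Comod

variable {k : Type} [Field k] {H : Type} [Ring H] [HopfAlgebra k H] (G : GrSemiring k H)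

/-- A finite-dimensional comodule representing a class of the Grothendieck semiring. -/
noncomputable def rep (r : G.R) : Comod k H := (G.cls_surj r).choose

theorem isComodule_rep (r : G.R) : (G.rep r).IsComodule := (G.cls_surj r).choose_spec.1

instance (r : G.R) : FiniteDimensional k (G.rep r).X := (G.cls_surj r).choose_spec.2.1

@[simp]
theorem cls_rep (r : G.R) : G.cls (G.rep r) = r := (G.cls_surj r).choose_spec.2.2

theorem finrank_rep {M : Comod k H} [FiniteDimensional k M.X] (hM : M.IsComodule) {r : G.R}
    (h : G.cls M = r) : Module.finrank k (G.rep r).X = Module.finrank k M.X :=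
  (G.cls_inj _ _ (G.isComodule_rep r) hM inferInstance inferInstance
    ((G.cls_rep r).trans h.symm)).finrank_eq

theorem finrank_rep_add (r s : G.R) : Module.finrank k (G.rep (r + s)).X =
    Module.finrank k (G.rep r).X + Module.finrank k (G.rep s).X := by
  have hr := G.isComodule_rep r
  have hs := G.isComodule_rep s
  rw [← finrank_dsum, G.finrank_rep (hr.dsum hs)]
  rw [G.cls_dsum _ _ hr hs inferInstance inferInstance, cls_rep, cls_rep]

theorem finrank_rep_mul (r s : G.R) : Module.finrank k (G.rep (r * s)).X =
    Module.finrank k (G.rep r).X * Module.finrank k (G.rep s).X := by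
  have hr := G.isComodule_rep r
  have hs := G.isComodule_rep s
  rw [← finrank_tensor, G.finrank_rep (hr.tensor hs)]
  rw [G.cls_tensor _ _ hr hs inferInstance inferInstance, cls_rep, cls_rep]

/-- The dimension function `[M] ↦ dim M` on the Grothendieck semiring. -/
noncomputable def dim : G.R →+* ℕ where
  toFun r := Module.finrank k (G.rep r).X
  map_zero' := by
    have h := G.finrank_rep_add 0 0
    rw [add_zero] at h
    omega
  map_add' := G.finrank_rep_add
  map_one' := (G.finrank_rep isComodule_unit G.cls_one).trans finrank_unit
  map_mul' := G.finrank_rep_mul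

theorem dim_cls {M : Comod k H} [FiniteDimensional k M.X] (hM : M.IsComodule) :
    G.dim (G.cls M) = Module.finrank k M.X :=
  G.finrank_rep hM rfl

theorem eq_zero_of_dim_eq_zero {r : G.R} (h : G.dim r = 0) : r = 0 := by
  have hr : Subsingleton (G.rep r).X := Module.finrank_zero_iff.1 h
  have h0 : Subsingleton (G.rep 0).X := Module.finrank_zero_iff.1 (map_zero G.dim)
  rw [← G.cls_rep r, ← G.cls_rep 0]
  exact G.cls_iso _ _ (G.isComodule_rep r) (G.isComodule_rep 0) inferInstance inferInstance
    Iso.of_subsingleton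

theorem cls_tpow {M : Comod k H} [FiniteDimensional k M.X] (hM : M.IsComodule) :
    ∀ n, G.cls (M.tpow n) = G.cls M ^ n
  | 0 => by rw [pow_zero]; exact G.cls_one
  | 1 => by rw [pow_one]; rfl
  | n + 2 => by
    rw [pow_succ, ← cls_tpow hM (n + 1)]
    exact G.cls_tensor _ _ (hM.tpow (n + 1)) hM inferInstance inferInstance

theorem cls_eq_add_of_isCompl {M : Comod k H} [FiniteDimensional k M.X] (hM : M.IsComodule)
    {A B : Submodule k M.X} (hA : M.IsSubcomodule A) (hB : M.IsSubcomodule B)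
    (hAB : IsCompl A B) : G.cls M = G.cls (M.restrict A hA) + G.cls (M.restrict B hB) := by
  rw [← G.cls_dsum _ _ (hM.restrict hA) (hM.restrict hB) inferInstance inferInstance]
  exact (G.cls_iso _ _ ((hM.restrict hA).dsum (hM.restrict hB)) hM inferInstance inferInstance
    (iso_dsum_restrict_of_isCompl hA hB hAB)).symm

theorem finrank_le_mul_of_supportedIn (hH : IsCosemisimple k H) {d : G.R →+ ℕ}
    (hd : ∀ r, d r = 0 → r = 0) {W : Submodule k H} [FiniteDimensional k W] {M : Comod k H}
    [FiniteDimensional k M.X] (hM : M.IsComodule) (hW : M.SupportedIn W) :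
    Module.finrank k M.X ≤ Module.finrank k W * d (G.cls M) := by
  induction hn : Module.finrank k M.X using Nat.strong_induction_on generalizing M with
  | _ n ih =>
  subst hn
  rcases subsingleton_or_nontrivial M.X with hsub | hnontrivial
  · simp [Module.finrank_zero_of_subsingleton]
  by_cases hsimple : ∀ A : Submodule k M.X, M.IsSubcomodule A → A = ⊥ ∨ A = ⊤
  · have hdM : d (G.cls M) ≠ 0 := fun h => by
      have := G.dim_cls hM
      rw [hd _ h, map_zero] at this
      exact Module.finrank_pos.ne this
    calc Module.finrank k M.X ≤ Module.finrank k W :=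
          IsSimple.finrank_le ⟨hM, hnontrivial, inferInstance, hsimple⟩ hW
      _ ≤ Module.finrank k W * d (G.cls M) := Nat.le_mul_of_pos_right _ (Nat.pos_of_ne_zero hdM)
  · push Not at hsimple
    obtain ⟨A, hA, hA_bot, hA_top⟩ := hsimple
    obtain ⟨B, hB, hAB⟩ := hH M hM A hA
    have hadd : Module.finrank k A + Module.finrank k B = Module.finrank k M.X :=
      Submodule.finrank_add_eq_of_isCompl hAB
    have hA_pos : 0 < Module.finrank k A := Submodule.one_le_finrank_iff.2 hA_bot
    have hA_lt : Module.finrank k A < Module.finrank k M.X := Submodule.finrank_lt hA_top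
    have bound {C : Submodule k M.X} (hC : M.IsSubcomodule C)
        (hlt : Module.finrank k C < Module.finrank k M.X) :
        Module.finrank k C ≤ Module.finrank k W * d (G.cls (M.restrict C hC)) :=
      ih _ hlt (hM.restrict hC) (hW.of_injective (isHom_subtype hC) C.injective_subtype) rfl
    rw [G.cls_eq_add_of_isCompl hM hA hB hAB, map_add, mul_add, ← hadd]
    exact add_le_add (bound hA hA_lt) (bound hB (by omega))

end GrSemiring

section Growth

open Filter

theorem tendsto_div_log_atTop : Tendsto (fun x : ℝ => x / Real.log x) atTop atTop := by
  refine ((Real.tendsto_exp_div_pow_atTop 1).comp Real.tendsto_log_atTop).congr' ?_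
  filter_upwards [eventually_gt_atTop 0] with x hx
  simp [Real.exp_log hx]

theorem tendsto_log_div_log_atTop_of_pow_le {u : ℕ → ℝ} {c : ℝ} (hc : 1 < c)
    (hu : ∀ᶠ n in atTop, c ^ n ≤ u n) :
    Tendsto (fun n : ℕ => Real.log (u n) / Real.log n) atTop atTop := by
  have hlinear : Tendsto (fun n : ℕ => Real.log c * (n / Real.log n)) atTop atTop :=
    (tendsto_div_log_atTop.comp tendsto_natCast_atTop_atTop).const_mul_atTop (Real.log_pos hc)
  refine tendsto_atTop_mono' _ ?_ hlinear
  filter_upwards [hu] with n hn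
  have hlog : n * Real.log c ≤ Real.log (u n) := by
    rw [← Real.log_pow]
    exact Real.log_le_log (by positivity) hn
  rw [← mul_div_assoc, mul_comm]
  exact div_le_div_of_nonneg_right hlog (Real.log_natCast_nonneg n)

theorem GKdim_eq_top_of_pow_le_finrank {k A : Type} [Field k] [Ring A] [Algebra k A]
    (V : Submodule k A) [hV : FiniteDimensional k V] {c : ℝ} (hc : 1 < c)
    (h : ∀ᶠ n in atTop, c ^ n ≤ Module.finrank k ↥(V ^ n)) : GKdim k A = ⊤ := by
  rw [eq_top_iff, ← ((ENNReal.tendsto_ofReal_atTop.comp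
    (tendsto_log_div_log_atTop_of_pow_le hc h)).limsup_eq)]
  exact le_iSup₂_of_le V hV le_rfl

end Growth

theorem GrSemiring.GKdim_eq_top_of_lt_dim {k : Type} [Field k] {H : Type} [Ring H]
    [HopfAlgebra k H] (hH : IsCosemisimple k H) (G : GrSemiring k H) {d : G.R →+* ℕ}
    (hd : ∀ r, d r = 0 → r = 0) {r : G.R} (hr : d r < G.dim r) : GKdim k H = ⊤ := by
  obtain ⟨W, _, hW⟩ := (G.rep r).exists_finiteDimensional_supportedIn
  have hpos : 0 < d r := by
    refine Nat.pos_of_ne_zero fun h => ?_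
    simp [hd r h] at hr
  have hpow (n : ℕ) : G.dim r ^ n ≤ Module.finrank k ↥(W ^ n) * d r ^ n := by
    have : FiniteDimensional k ↥(W ^ n) :=
      Module.Finite.iff_fg.2 ((Module.Finite.iff_fg.1 ‹_›).pow n)
    have hrep := G.isComodule_rep r
    have := G.finrank_le_mul_of_supportedIn hH (d := d.toAddMonoidHom) hd (hrep.tpow n) (hW.tpow n)
    rw [← G.dim_cls (hrep.tpow n), G.cls_tpow hrep, cls_rep, map_pow] at this
    simpa using this
  refine GKdim_eq_top_of_pow_le_finrank W (c := G.dim r / d r) ?_ (.of_forall fun n => ?_)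
  · rw [one_lt_div (by positivity)]
    exact_mod_cast hr
  · rw [div_pow, div_le_iff₀ (by positivity)]
    exact_mod_cast hpow n

theorem stmt6_general {k : Type} [Field k] {H : Type} [Ring H] [HopfAlgebra k H]
    {K : Type} [Ring K] [HopfAlgebra k K] (hH : IsCosemisimple k H)
    (GH : GrSemiring k H) (GK : GrSemiring k K)
    (f : GH.R →+* GK.R) (hf : Function.Injective f)
    {X : Comod k H} (hX : X.IsComodule) [FiniteDimensional k X.X]
    {X' : Comod k K} (hX' : X'.IsComodule) [FiniteDimensional k X'.X]
    (hcls : GK.cls X' = f (GH.cls X))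
    (hdim : Module.finrank k X'.X < Module.finrank k X.X) :
    GKdim k H = ⊤ := by
  refine GH.GKdim_eq_top_of_lt_dim hH (d := GK.dim.comp f) (r := GH.cls X) (fun r hr => ?_) ?_
  · exact (map_eq_zero_iff f hf).1 (GK.eq_zero_of_dim_eq_zero hr)
  · rwa [RingHom.comp_apply, ← hcls, GK.dim_cls hX', GH.dim_cls hX]

/-- Lemma 3.6 of the paper.  Let `H` and `K` be finitely
generated cosemisimple Hopf algebras over an algebraically closed field with a
semiring isomorphism `f : R_+(H) ≅ R_+(K)` of their Grothendieck semirings.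
If there is a class `[X] ∈ R_+(H)` with `dim X > dim f([X])`, then
`GKdim H = ∞`. -/
theorem stmt6 (k : Type) [Field k] [IsAlgClosed k]
    (H : Type) [Ring H] [HopfAlgebra k H]
    (K : Type) [Ring K] [HopfAlgebra k K]
    (hH : IsCosemisimple k H) (hK : IsCosemisimple k K)
    (hfgH : Algebra.FiniteType k H) (hfgK : Algebra.FiniteType k K)
    (GH : GrSemiring k H) (GK : GrSemiring k K)
    (f : GH.R ≃+* GK.R)
    (X : Comod k H) (hX : X.IsComodule) (hXfd : FiniteDimensional k X.X)
    (X' : Comod k K) (hX' : X'.IsComodule) (hX'fd : FiniteDimensional k X'.X)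
    (hcls : GK.cls X' = f (GH.cls X))
    (hdim : Module.finrank k X'.X < Module.finrank k X.X) :
    GKdim k H = ⊤ :=
  stmt6_general hH GH GK f.toRingHom f.injective hX hX' hcls hdim
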